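/- Let p be an odd prime and let E_p be the elliptic curve over ℚ with Weierstrass equation y² = x³ + p·x. Then the quotient group E_p(ℚ)/2E_p(ℚ) is finite, and its order is at most 2 if p ≡ 7 or 11 (mod 16), at most 4 if p ≡ 3, 5, 13, or 15 (mod 16), and at most 8 if p ≡ 1 or 9 (mod 16). -/

import Mathlib

/-- The elliptic curve `E_p : y² = x³ + p·x` over `ℚ`, as an affine Weierstrass curve. -/
def EDcurve (D : ℚ) : WeierstrassCurve.Affine ℚ := ⟨0, 0, 0, D, 0⟩

/-- The subgroup `2·G` of an abelian group `G`, the image of multiplication by `2`. -/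
def twoSub (G : Type*) [AddCommGroup G] : AddSubgroup G := (2 • AddMonoidHom.id G).range
namespace ED

lemma int_of_sq (z : ℚ) (n : ℤ) (h : z ^ 2 = n) : ∃ k : ℤ, z = k := by
  have h1 : IsIntegral ℤ z := by
    refine IsIntegral.of_pow (n := 2) (by norm_num) ?_
    rw [h]
    exact isIntegral_algebraMap (R := ℤ) (x := n)
  obtain ⟨k, hk⟩ := IsIntegrallyClosed.isIntegral_iff.mp h1
  exact ⟨k, by simpa using hk.symm⟩

lemma int_of_mul_sq (z : ℚ) (t n : ℤ) (ht : t = -1 ∨ t = 2 ∨ t = -2) (h : t * z ^ 2 = n) :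
    ∃ k : ℤ, z = k := by
  obtain ⟨k, hk⟩ := int_of_sq (t * z) (t * n) (by push_cast; rw [← h]; ring)
  have h2 : k ^ 2 = t * n := by
    have : (k : ℚ) ^ 2 = t * n := by rw [← hk, ← h]; ring
    exact_mod_cast this
  have h3 : t ∣ k := by
    rcases ht with rfl | rfl | rfl
    · exact (by norm_num : IsUnit (-1 : ℤ)).dvd
    · exact Int.prime_two.dvd_of_dvd_pow ⟨_, h2⟩
    · rw [Int.neg_dvd]
      exact Int.prime_two.dvd_of_dvd_pow (n := 2) ⟨-n, by rw [h2]; ring⟩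
  obtain ⟨j, rfl⟩ := h3
  have ht0 : (t : ℚ) ≠ 0 := by rcases ht with rfl | rfl | rfl <;> norm_num
  refine ⟨j, mul_left_cancel₀ ht0 ?_⟩
  rw [hk]; push_cast; ring

lemma clear_den (w u : ℚ) (N t : ℤ) (ht : t = -1 ∨ t = 2 ∨ t = -2)
    (h : (N : ℚ) = w ^ 4 - t * u ^ 2) :
    ∃ a b c : ℤ, IsCoprime a c ∧ N * c ^ 4 = a ^ 4 - t * b ^ 2 := by
  have hc : (w.den : ℚ) ≠ 0 := by exact_mod_cast w.den_nz
  have hw : w * w.den = w.num := Rat.mul_den_eq_num w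
  have key : (t : ℚ) * (w.den ^ 2 * u) ^ 2 = ((w.num ^ 4 - N * w.den ^ 4 : ℤ) : ℚ) := by
    push_cast
    rw [← hw, h]; ring
  obtain ⟨b, hb⟩ := int_of_mul_sq _ t _ ht key
  refine ⟨w.num, b, w.den, ?_, ?_⟩
  · rw [Int.isCoprime_iff_gcd_eq_one]
    simpa [Int.gcd] using w.reduced
  · rw [hb] at key
    have : t * b ^ 2 = w.num ^ 4 - N * w.den ^ 4 := by exact_mod_cast key
    linarith

lemma sq_mod (p : ℕ) [Fact p.Prime] (a b c m t : ℤ) (hac : IsCoprime a c) (hm : ¬ (p : ℤ) ∣ m)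
    (h : p * m * c ^ 4 = a ^ 4 - t * b ^ 2) : IsSquare (t : ZMod p) := by
  have hpp : Prime (p : ℤ) := Nat.prime_iff_prime_int.mp Fact.out
  have h1 : (a : ZMod p) ^ 4 = t * b ^ 2 := by
    have := congrArg (Int.cast : ℤ → ZMod p) h
    push_cast at this
    simp at this
    linear_combination -this
  by_cases hb : (b : ZMod p) = 0
  · exfalso
    have ha : (a : ZMod p) = 0 := by
      have : (a : ZMod p) ^ 4 = 0 := by rw [h1, hb]; ring
      exact pow_eq_zero_iff (by norm_num) |>.mp this
    rw [ZMod.intCast_zmod_eq_zero_iff_dvd] at ha hb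
    have hc : ¬ (p : ℤ) ∣ c := fun hc => hpp.not_isUnit (hac.isUnit_of_dvd' ha hc)
    obtain ⟨a', rfl⟩ := ha
    obtain ⟨b', rfl⟩ := hb
    have : (p : ℤ) ∣ m * c ^ 4 := by
      refine ⟨p ^ 2 * a' ^ 4 - t * b' ^ 2, mul_left_cancel₀ hpp.ne_zero ?_⟩
      linear_combination h
    rcases hpp.dvd_or_dvd this with h2 | h2
    · exact hm h2
    · exact hc (hpp.dvd_of_dvd_pow h2)
  · exact ⟨a ^ 2 / b, by field_simp; linear_combination -h1⟩

lemma not_dvd_four (p : ℕ) (hp : p.Prime) (hodd : p ≠ 2) : ¬ (p : ℤ) ∣ 4 := by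
  intro h
  have h1 : p ∣ 2 ^ 2 := by exact_mod_cast h
  exact hodd ((Nat.prime_dvd_prime_iff_eq hp Nat.prime_two).mp (hp.dvd_of_dvd_pow h1))

lemma excl_neg_one (p : ℕ) (hp : p.Prime) (hodd : p ≠ 2) (w u : ℚ)
    (h : 4 * (p : ℚ) = w ^ 4 + 4 * u ^ 2) : p % 4 ≠ 3 := by
  have := Fact.mk hp
  obtain ⟨a, b, c, hac, h1⟩ := clear_den w (2 * u) (p * 4) (-1) (by simp)
    (by push_cast; linear_combination h)
  have := sq_mod p a b c 4 (-1) hac (not_dvd_four p hp hodd) h1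
  rw [← ZMod.exists_sq_eq_neg_one_iff]
  simpa using this

lemma four_mod (a : ℤ) (h : a % 2 = 1) : a ^ 4 % 16 = 1 := by
  have h8 : a % 16 = 1 ∨ a % 16 = 3 ∨ a % 16 = 5 ∨ a % 16 = 7 ∨ a % 16 = 9 ∨ a % 16 = 11 ∨
    a % 16 = 13 ∨ a % 16 = 15 := by omega
  rcases h8 with h | h | h | h | h | h | h | h <;> simp [pow_succ, Int.mul_emod, h]

lemma sq_mod16 (a : ℤ) : a ^ 2 % 8 = 0 ∨ a ^ 2 % 8 = 1 ∨ a ^ 2 % 8 = 4 := by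
  have h8 : a % 8 = 0 ∨ a % 8 = 1 ∨ a % 8 = 2 ∨ a % 8 = 3 ∨ a % 8 = 4 ∨ a % 8 = 5 ∨
    a % 8 = 6 ∨ a % 8 = 7 := by omega
  rcases h8 with h | h | h | h | h | h | h | h <;> simp [pow_succ, Int.mul_emod, h]

lemma odd_of (p : ℕ) (hp2 : p % 2 = 1) (a b c e : ℤ) (hac : IsCoprime a c)
    (h : p * c ^ 4 = a ^ 4 - 2 * e * b ^ 2) : a % 2 = 1 ∧ c % 2 = 1 := by
  have hpar : Even ((p : ℤ) * c ^ 4) ↔ Even (a ^ 4) := by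
    rw [h, mul_assoc, Int.even_sub]; simp
  have hpo : ¬ Even (p : ℤ) := by
    rw [Int.not_even_iff]; omega
  rw [Int.even_mul, Int.even_pow' (by norm_num), Int.even_pow' (by norm_num)] at hpar
  by_cases ha : Even a
  · exfalso
    have hc : Even c := by tauto
    have := hac.isUnit_of_dvd' ha.two_dvd hc.two_dvd
    exact Int.prime_two.not_isUnit this
  · have hc : ¬ Even c := by tauto
    rw [Int.not_even_iff] at ha hc
    exact ⟨ha, hc⟩

lemma excl_two (p : ℕ) (hp : p.Prime) (hodd : p ≠ 2) (w u : ℚ)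
    (h : (p : ℚ) = w ^ 4 - 2 * u ^ 2) : p % 16 = 1 ∨ p % 16 = 9 ∨ p % 16 = 15 := by
  have := Fact.mk hp
  obtain ⟨a, b, c, hac, h1⟩ := clear_den w u p 2 (by simp) (by push_cast; exact h)
  have h2 := sq_mod p a b c 1 2 hac
    (fun h => (Nat.prime_iff_prime_int.mp hp).not_isUnit (isUnit_of_dvd_one h)) (by simpa using h1)
  have h3 : p % 8 = 1 ∨ p % 8 = 7 := by
    rw [← ZMod.exists_sq_eq_two_iff hodd]; simpa using h2
  obtain ⟨ha, hc⟩ := odd_of p (by omega) a b c 1 hac (by linarith)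
  have ha4 := four_mod a ha
  have hc4 := four_mod c hc
  have hb := sq_mod16 b
  have h4 : ((p : ℤ) * c ^ 4) % 16 = p % 16 := by rw [Int.mul_emod, hc4]; simp
  generalize a ^ 4 = A at *
  generalize b ^ 2 = B at *
  generalize (p : ℤ) * c ^ 4 = C at *
  omega

lemma excl_neg_two (p : ℕ) (hp : p.Prime) (hodd : p ≠ 2) (w u : ℚ)
    (h : (p : ℚ) = w ^ 4 + 2 * u ^ 2) : p % 16 = 1 ∨ p % 16 = 9 ∨ p % 16 = 3 := by
  have := Fact.mk hp
  obtain ⟨a, b, c, hac, h1⟩ := clear_den w u p (-2) (by simp) (by push_cast; linarith)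
  have h2 := sq_mod p a b c 1 (-2) hac
    (fun h => (Nat.prime_iff_prime_int.mp hp).not_isUnit (isUnit_of_dvd_one h)) (by simpa using h1)
  have h3 : p % 8 = 1 ∨ p % 8 = 3 := by
    rw [← ZMod.exists_sq_eq_neg_two_iff hodd]; simpa using h2
  obtain ⟨ha, hc⟩ := odd_of p (by omega) a b c (-1) hac (by linarith)
  have ha4 := four_mod a ha
  have hc4 := four_mod c hc
  have hb := sq_mod16 b
  have h4 : ((p : ℤ) * c ^ 4) % 16 = p % 16 := by rw [Int.mul_emod, hc4]; simp
  generalize a ^ 4 = A at *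
  generalize b ^ 2 = B at *
  generalize (p : ℤ) * c ^ 4 = C at *
  omega

lemma coprime_split (p : ℕ) (hp : p.Prime) (U V n : ℤ) (hUV : IsCoprime U V)
    (h : U * V = p * n ^ 2) :
    (∃ k : ℤ, U = k ^ 2 ∨ U = -k ^ 2) ∨ (∃ k : ℤ, V = k ^ 2 ∨ V = -k ^ 2) := by
  have hpp : Prime (p : ℤ) := Nat.prime_iff_prime_int.mp hp
  rcases hpp.dvd_or_dvd (⟨_, h⟩ : (p : ℤ) ∣ U * V) with ⟨U', rfl⟩ | ⟨V', rfl⟩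
  · right
    refine Int.sq_of_isCoprime (b := U') (c := n) hUV.of_mul_left_right.symm ?_
    apply mul_left_cancel₀ hpp.ne_zero
    linear_combination h
  · left
    refine Int.sq_of_isCoprime (b := V') (c := n) hUV.of_mul_right_right ?_
    apply mul_left_cancel₀ hpp.ne_zero
    linear_combination h

lemma classify0 (p : ℕ) (hp : p.Prime) (hodd : p ≠ 2) (r s : ℚ) (h : s ^ 2 = r ^ 4 + p) :
    ∃ d : ℤ, (d = 1 ∨ d = -1 ∨ d = 2 ∨ d = -2) ∧
      ∃ w : ℚ, 2 * (r ^ 2 + s) = d * w ^ 2 ∨ 2 * (r ^ 2 - s) = d * w ^ 2 := by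
  have hpp : Prime (p : ℤ) := Nat.prime_iff_prime_int.mp hp
  have hp2 : p % 2 = 1 := by rcases hp.eq_two_or_odd with h | h <;> omega
  obtain ⟨a, c, hac, hc0, hr⟩ : ∃ a c : ℤ, IsCoprime a c ∧ (c : ℚ) ≠ 0 ∧ r * c = a := by
    refine ⟨r.num, r.den, ?_, ?_, ?_⟩
    · rw [Int.isCoprime_iff_gcd_eq_one]
      simpa [Int.gcd] using r.reduced
    · exact_mod_cast r.den_nz
    · exact_mod_cast Rat.mul_den_eq_num r
  obtain ⟨b, hb⟩ := int_of_sq (s * c ^ 2) (a ^ 4 + p * c ^ 4) (by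
    push_cast; rw [← hr]; linear_combination (c : ℚ) ^ 4 * h)
  have hE : b ^ 2 = a ^ 4 + p * c ^ 4 := by
    have : (b : ℚ) ^ 2 = a ^ 4 + p * c ^ 4 := by
      rw [← hr, ← hb]; linear_combination (c : ℚ) ^ 4 * h
    exact_mod_cast this
  have hr' : r = a / c := by field_simp; exact hr
  have hs' : s = b / c ^ 2 := by field_simp; exact hb
  have hab : IsCoprime a b := by
    apply isCoprime_of_prime_dvd
    · rintro ⟨rfl, rfl⟩
      have : (p : ℤ) * c ^ 4 = 0 := by linarith
      have hc : (c : ℤ) ≠ 0 := by exact_mod_cast hc0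
      have := hpp.ne_zero
      simp_all
    · intro q hq hqa hqb
      have hqc : ¬ q ∣ c := fun hqc => hq.not_isUnit (hac.isUnit_of_dvd' hqa hqc)
      obtain ⟨a', rfl⟩ := hqa
      obtain ⟨b', rfl⟩ := hqb
      have h1 : q * q ∣ c ^ 4 * p := ⟨b' ^ 2 - q ^ 2 * a' ^ 4, by linear_combination -hE⟩
      have hcop : IsCoprime q (c ^ 4) := ((Prime.coprime_iff_not_dvd hq).mpr hqc).pow_right
      have h2 : q * q ∣ p := (IsCoprime.mul_left hcop hcop).dvd_of_dvd_mul_left h1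
      exact hq.not_isUnit (hpp.irreducible.squarefree q h2)
  obtain ⟨x, y, hxy⟩ : IsCoprime (a ^ 2) b := hab.pow_left
  rcases Int.even_or_odd' (b + a ^ 2) with ⟨U, hU | hU⟩
  · obtain ⟨V, hV⟩ : ∃ V, V = U - a ^ 2 := ⟨_, rfl⟩
    have h4 : 4 * (U * V) = p * c ^ 4 := by
      rw [hV]; linear_combination hE - (b - a ^ 2 + 2 * U) * hU
    have hcop : IsCoprime U V := ⟨x + y, y - x, by rw [← hxy, hV]; linear_combination -y * hU⟩
    have hc2 : Even c := by
      have : Even ((p : ℤ) * c ^ 4) := by rw [← h4]; exact ⟨2 * (U * V), by ring⟩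
      rw [Int.even_mul, Int.even_pow' (by norm_num)] at this
      rcases this with h | h
      · rw [Int.even_iff] at h; omega
      · exact h
    obtain ⟨c', hc'⟩ := hc2.two_dvd
    have hUe : 2 * (r ^ 2 + s) = U * (2 / c) ^ 2 := by
      have : (b : ℚ) + a ^ 2 = 2 * U := by exact_mod_cast hU
      rw [hr', hs']; field_simp; linear_combination this
    have hVe : 2 * (r ^ 2 - s) = - V * (2 / c) ^ 2 := by
      have : (b : ℚ) + a ^ 2 = 2 * U := by exact_mod_cast hU
      rw [hr', hs', hV]; push_cast; field_simp; linear_combination -this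
    rcases coprime_split p hp U V (2 * c' ^ 2) hcop (by
      rw [hc'] at h4; linarith) with ⟨k, hk | hk⟩ | ⟨k, hk | hk⟩
    · exact ⟨1, by simp, k * (2 / c), Or.inl (by rw [hUe, hk]; push_cast; ring)⟩
    · exact ⟨-1, by simp, k * (2 / c), Or.inl (by rw [hUe, hk]; push_cast; ring)⟩
    · exact ⟨-1, by simp, k * (2 / c), Or.inr (by rw [hVe, hk]; push_cast; ring)⟩
    · exact ⟨1, by simp, k * (2 / c), Or.inr (by rw [hVe, hk]; push_cast; ring)⟩
  · have hcop : IsCoprime (b + a ^ 2) (b - a ^ 2) :=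
      ⟨1 - U * (x + y), -U * (y - x), by linear_combination hU - 2 * U * hxy⟩
    have hUe : 2 * (r ^ 2 + s) = 2 * ((b + a ^ 2 : ℤ) : ℚ) * (1 / c) ^ 2 := by
      rw [hr', hs']; push_cast; field_simp; ring
    have hVe : 2 * (r ^ 2 - s) = - 2 * ((b - a ^ 2 : ℤ) : ℚ) * (1 / c) ^ 2 := by
      rw [hr', hs']; push_cast; field_simp; ring
    rcases coprime_split p hp _ _ (c ^ 2) hcop (by linear_combination hE)
      with ⟨k, hk | hk⟩ | ⟨k, hk | hk⟩
    · exact ⟨2, by simp, k * (1 / c), Or.inl (by rw [hUe, hk]; push_cast; ring)⟩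
    · exact ⟨-2, by simp, k * (1 / c), Or.inl (by rw [hUe, hk]; push_cast; ring)⟩
    · exact ⟨-2, by simp, k * (1 / c), Or.inr (by rw [hVe, hk]; push_cast; ring)⟩
    · exact ⟨2, by simp, k * (1 / c), Or.inr (by rw [hVe, hk]; push_cast; ring)⟩

/-- The admissible classes. -/
def Dset (p : ℕ) : Finset ℤ :=
  if p % 16 = 7 ∨ p % 16 = 11 then {1}
  else if p % 16 = 3 then {1, -2}
  else if p % 16 = 15 then {1, 2}
  else if p % 16 = 5 ∨ p % 16 = 13 then {1, -1}
  else {1, -1, 2, -2}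

lemma one_mem_Dset (p : ℕ) : (1 : ℤ) ∈ Dset p := by
  unfold Dset; split_ifs <;> simp

lemma restrict (p : ℕ) (hp : p.Prime) (hodd : p ≠ 2) (r s w : ℚ) (d : ℤ)
    (hd : d = 1 ∨ d = -1 ∨ d = 2 ∨ d = -2) (h : s ^ 2 = r ^ 4 + p)
    (hw : 2 * (r ^ 2 + s) = d * w ^ 2) : d ∈ Dset p := by
  have hs : s = d * w ^ 2 / 2 - r ^ 2 := by linear_combination hw / 2
  rw [hs] at h
  rcases hd with rfl | rfl | rfl | rfl
  · exact one_mem_Dset p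
  · have := excl_neg_one p hp hodd w (w * r) (by push_cast at h; linear_combination -4 * h)
    unfold Dset; split_ifs <;> first | omega | simp
  · have := excl_two p hp hodd w (w * r) (by push_cast at h; linear_combination -h)
    unfold Dset; split_ifs <;> first | omega | simp
  · have := excl_neg_two p hp hodd w (w * r) (by push_cast at h; linear_combination -h)
    unfold Dset; split_ifs <;> first | omega | simp

lemma classify (p : ℕ) (hp : p.Prime) (hodd : p ≠ 2) (r s : ℚ) (h : s ^ 2 = r ^ 4 + p) :
    ∃ d ∈ Dset p, ∃ w : ℚ, 2 * (r ^ 2 + s) = d * w ^ 2 ∨ 2 * (r ^ 2 - s) = d * w ^ 2 := by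
  obtain ⟨d, hd, w, hw | hw⟩ := classify0 p hp hodd r s h
  · exact ⟨d, restrict p hp hodd r s w d hd h hw, w, Or.inl hw⟩
  · exact ⟨d, restrict p hp hodd r (-s) w d hd (by rw [neg_sq]; exact h) (by rw [← hw]; ring), w,
      Or.inr hw⟩

lemma x_class (p : ℕ) (hp : p.Prime) (x y : ℚ) (hx : x ≠ 0) (h : y ^ 2 = x ^ 3 + p * x) :
    ∃ r : ℚ, r ≠ 0 ∧ (x = r ^ 2 ∨ x = p * r ^ 2) := by
  have hpp : Prime (p : ℤ) := Nat.prime_iff_prime_int.mp hp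
  have hp0 : (0 : ℚ) < p := by exact_mod_cast hp.pos
  have hxpos : 0 < x := by
    by_contra hneg
    have hx' : x < 0 := lt_of_le_of_ne (not_lt.mp hneg) hx
    nlinarith [sq_nonneg y, mul_pos (neg_pos.mpr hx') (by positivity : 0 < x ^ 2 + p)]
  obtain ⟨m, n, hmn, hn0, hm0, hxn⟩ :
      ∃ m n : ℤ, IsCoprime m n ∧ 0 < n ∧ 0 < m ∧ x * n = m := by
    refine ⟨x.num, x.den, ?_, ?_, Rat.num_pos.mpr hxpos, ?_⟩
    · rw [Int.isCoprime_iff_gcd_eq_one]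
      simpa [Int.gcd] using x.reduced
    · exact_mod_cast x.den_pos
    · exact_mod_cast Rat.mul_den_eq_num x
  have hnq : (n : ℚ) ≠ 0 := by exact_mod_cast hn0.ne'
  have hx' : x = m / n := by field_simp; exact hxn
  obtain ⟨b, hb⟩ := int_of_sq (y * n ^ 2) (n * (m * (m ^ 2 + p * n ^ 2))) (by
    push_cast; rw [← hxn]; linear_combination (n : ℚ) ^ 4 * h)
  have hE : n * (m * (m ^ 2 + p * n ^ 2)) = b ^ 2 := by
    have : (n : ℚ) * (m * (m ^ 2 + p * n ^ 2)) = b ^ 2 := by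
      rw [← hxn, ← hb]; linear_combination -(n : ℚ) ^ 4 * h
    exact_mod_cast this
  have pos_sq : ∀ z : ℤ, 0 < z → (∃ k : ℤ, z = k ^ 2 ∨ z = -k ^ 2) → ∃ k : ℤ, k ≠ 0 ∧ z = k ^ 2 := by
    rintro z hz ⟨k, hk | hk⟩
    · exact ⟨k, by rintro rfl; simp at hk; omega, hk⟩
    · nlinarith [sq_nonneg k]
  have hc1 : IsCoprime n (m ^ 2 + p * n ^ 2) := by
    have : m ^ 2 + p * n ^ 2 = m ^ 2 + n * (p * n) := by ring
    rw [this]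
    exact IsCoprime.add_mul_left_right hmn.symm.pow_right _
  obtain ⟨j, hj0, hj⟩ := pos_sq n hn0
    (Int.sq_of_isCoprime (hmn.symm.mul_right hc1) hE)
  have hjq : (j : ℚ) ≠ 0 := by exact_mod_cast hj0
  have hE2 : ∃ b' : ℤ, m * (m ^ 2 + p * n ^ 2) = b' ^ 2 := by
    have : j ∣ b := by
      rw [← Int.pow_dvd_pow_iff (n := 2) (by norm_num), ← hE, ← hj]; exact Dvd.intro _ rfl
    obtain ⟨b', rfl⟩ := this
    refine ⟨b', mul_left_cancel₀ hn0.ne' ?_⟩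
    rw [hE, hj]; ring
  obtain ⟨b', hb'⟩ := hE2
  by_cases hpm : (p : ℤ) ∣ m
  · obtain ⟨m', rfl⟩ := hpm
    have hpb : (p : ℤ) ∣ b' := by
      apply hpp.dvd_of_dvd_pow (n := 2)
      rw [← hb']; exact ⟨_, mul_assoc _ _ _⟩
    obtain ⟨b2, rfl⟩ := hpb
    have h3 : m' * (n ^ 2 + m' * (p * m')) = b2 ^ 2 := by
      apply mul_left_cancel₀ (pow_ne_zero 2 hpp.ne_zero)
      linear_combination hb'
    have hc : IsCoprime m' (n ^ 2 + m' * (p * m')) :=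
      IsCoprime.add_mul_left_right hmn.of_mul_left_right.pow_right _
    have hm' : 0 < m' := by
      have : (0 : ℤ) < p := by exact_mod_cast hp.pos
      exact pos_of_mul_pos_right hm0 this.le
    obtain ⟨k, hk0, hk⟩ := pos_sq m' hm' (Int.sq_of_isCoprime hc h3)
    have hkq : (k : ℚ) ≠ 0 := by exact_mod_cast hk0
    exact ⟨k / j, by positivity, Or.inr (by rw [hx', hj, hk]; push_cast; field_simp)⟩
  · have hc : IsCoprime m (p * n ^ 2 + m * m) := by
      apply IsCoprime.add_mul_left_right
      exact (((Prime.coprime_iff_not_dvd hpp).mpr hpm).symm).mul_right hmn.pow_right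
    obtain ⟨k, hk0, hk⟩ := pos_sq m hm0 (Int.sq_of_isCoprime hc (by rw [← hb']; ring))
    have hkq : (k : ℚ) ≠ 0 := by exact_mod_cast hk0
    exact ⟨k / j, by positivity, Or.inl (by rw [hx', hj, hk]; push_cast; field_simp)⟩

end ED

namespace ED
open WeierstrassCurve WeierstrassCurve.Affine

lemma eqn_iff (D x y : ℚ) : (EDcurve D).Equation x y ↔ y ^ 2 = x ^ 3 + D * x := by
  rw [equation_iff]; simp [EDcurve]

lemma nons (D x y : ℚ) (hD : D ≠ 0) (h : y ^ 2 = x ^ 3 + D * x) : (EDcurve D).Nonsingular x y := by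
  rw [← equation_iff_nonsingular_of_Δ_ne_zero, eqn_iff]
  · exact h
  · simp [EDcurve, WeierstrassCurve.Δ, WeierstrassCurve.b₂, WeierstrassCurve.b₄,
      WeierstrassCurve.b₆, WeierstrassCurve.b₈, hD]

lemma mem_twoSub {G : Type*} [AddCommGroup G] (x : G) : x ∈ twoSub G ↔ ∃ y, y + y = x := by
  simp [twoSub, AddMonoidHom.mem_range, two_nsmul]

lemma some_congr {D x y x' y' : ℚ} (h : (EDcurve D).Nonsingular x y)
    (h' : (EDcurve D).Nonsingular x' y') (hx : x = x') (hy : y = y') :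
    (Point.some x y h) = Point.some x' y' h' := by
  subst hx hy; rfl

/-- Points whose image under the second descent map is trivial are doubles. -/
lemma double (D r s w : ℚ) (hD : D ≠ 0)
    (h : (EDcurve D).Nonsingular (r ^ 2) (r * s)) (hr : r ≠ 0)
    (hw : 2 * (r ^ 2 + s) = w ^ 2) : Point.some _ _ h ∈ twoSub (EDcurve D).Point := by
  have he := (eqn_iff _ _ _).mp h.1
  have hs2 : s ^ 2 = r ^ 4 + D := by
    apply mul_left_cancel₀ (pow_ne_zero 2 hr); linear_combination he
  have hs : s = w ^ 2 / 2 - r ^ 2 := by linear_combination hw / 2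
  have hD' : D = w ^ 4 / 4 - w ^ 2 * r ^ 2 := by rw [hs] at hs2; linear_combination -hs2
  have hw0 : w ≠ 0 := by rintro rfl; apply hD; rw [hD']; ring
  obtain ⟨X, hX⟩ : ∃ X, X = (w ^ 2 + 2 * w * r) / 2 := ⟨_, rfl⟩
  have hq : X ^ 2 - w ^ 2 * X + D = 0 := by rw [hX, hD']; ring
  have hX0 : X ≠ 0 := by rintro rfl; apply hD; linear_combination hq
  have hQ : (EDcurve D).Nonsingular X (X * w) := nons D _ _ hD (by linear_combination -X * hq)
  rw [mem_twoSub]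
  refine ⟨.some _ _ hQ, ?_⟩
  have hne : X * w ≠ (EDcurve D).negY X (X * w) := by
    simp only [negY, EDcurve]
    intro h
    have : X * w = 0 := by linear_combination h / 2
    exact mul_ne_zero hX0 hw0 this
  have hsl : (EDcurve D).slope X X (X * w) (X * w) = w + r := by
    rw [slope_of_Y_ne rfl hne]
    have : X * w + X * w ≠ 0 := by rw [← two_mul]; exact mul_ne_zero two_ne_zero (mul_ne_zero hX0 hw0)
    simp only [negY, EDcurve]
    rw [div_eq_iff (by simpa using this)]
    have hD2 : D = w ^ 2 * X - X ^ 2 := by linear_combination hq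
    rw [hD2]
    linear_combination 2 * X * hX
  rw [Point.add_self_of_Y_ne hne]
  apply some_congr
  · rw [hsl]; simp only [addX, EDcurve]; rw [hX]; ring
  · rw [hsl]; simp only [addX, addY, negAddY, negY, EDcurve]; rw [hs, hX]; ring

lemma sum_mem (p : ℕ) (hp : p.Prime) (d : ℤ) (r₁ s₁ w₁ r₂ s₂ w₂ : ℚ)
    (h₁ : (EDcurve p).Nonsingular (r₁ ^ 2) (r₁ * s₁)) (hr₁ : r₁ ≠ 0)
    (hw₁ : 2 * (r₁ ^ 2 + s₁) = d * w₁ ^ 2)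
    (h₂ : (EDcurve p).Nonsingular (r₂ ^ 2) (r₂ * s₂)) (hr₂ : r₂ ≠ 0)
    (hw₂ : 2 * (r₂ ^ 2 + s₂) = d * w₂ ^ 2) (hx : r₁ ^ 2 ≠ r₂ ^ 2) :
    Point.some _ _ h₁ + Point.some _ _ h₂ ∈ twoSub (EDcurve p).Point := by
  have hp0 : (p : ℚ) ≠ 0 := by exact_mod_cast hp.ne_zero
  have e₁ := (eqn_iff _ _ _).mp h₁.1
  have e₂ := (eqn_iff _ _ _).mp h₂.1
  have hs₁ : s₁ ^ 2 = r₁ ^ 4 + p := by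
    apply mul_left_cancel₀ (pow_ne_zero 2 hr₁); linear_combination e₁
  have hxs : r₁ ^ 2 - r₂ ^ 2 ≠ 0 := sub_ne_zero.mpr hx
  obtain ⟨l, hl⟩ : ∃ l, l = (r₁ * s₁ - r₂ * s₂) / (r₁ ^ 2 - r₂ ^ 2) := ⟨_, rfl⟩
  have hl' : l * (r₁ ^ 2 - r₂ ^ 2) = r₁ * s₁ - r₂ * s₂ := by rw [hl]; field_simp
  obtain ⟨v, hv⟩ : ∃ v, v = r₁ * s₁ - l * r₁ ^ 2 := ⟨_, rfl⟩
  have y₁ : r₁ * s₁ = l * r₁ ^ 2 + v := by rw [hv]; ring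
  have y₂ : r₂ * s₂ = l * r₂ ^ 2 + v := by linear_combination y₁ + hl'
  obtain ⟨x₃, hx₃⟩ : ∃ x₃, x₃ = l ^ 2 - r₁ ^ 2 - r₂ ^ 2 := ⟨_, rfl⟩
  rw [y₁] at e₁
  rw [y₂] at e₂
  have hA : l ^ 2 * (r₁ ^ 2 + r₂ ^ 2) + 2 * l * v =
      r₁ ^ 4 + r₁ ^ 2 * r₂ ^ 2 + r₂ ^ 4 + p := by
    apply mul_left_cancel₀ hxs
    linear_combination e₁ - e₂
  have hv2 : v ^ 2 = r₁ ^ 2 * r₂ ^ 2 * x₃ := by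
    rw [hx₃]; linear_combination e₁ - r₁ ^ 2 * hA
  obtain ⟨r₃, hr₃⟩ : ∃ r₃, r₃ = - v / (r₁ * r₂) := ⟨_, rfl⟩
  have hv3 : v = - r₁ * r₂ * r₃ := by rw [hr₃]; field_simp
  have hx3 : x₃ = r₃ ^ 2 := by
    apply mul_left_cancel₀ (pow_ne_zero 2 (mul_ne_zero hr₁ hr₂))
    rw [hv3] at hv2
    linear_combination -hv2
  have hr30 : r₃ ≠ 0 := by
    intro h0
    rw [h0] at hx3 hv3
    -- then `p` is a square
    have hsq : (r₁ * r₂) ^ 2 = (p : ℚ) := by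
      rw [hx₃] at hx3
      rw [hv3] at hA
      linear_combination hA - (r₁ ^ 2 + r₂ ^ 2) * hx3
    have : IsSquare ((p : ℚ)) := ⟨r₁ * r₂, by rw [← hsq]; ring⟩
    rw [Rat.isSquare_natCast_iff] at this
    exact hp.prime.not_isSquare this
  have hl2 : l ^ 2 = r₁ ^ 2 + r₂ ^ 2 + r₃ ^ 2 := by linear_combination hx3 - hx₃
  have t₁ : s₁ = l * r₁ - r₂ * r₃ := by
    apply mul_left_cancel₀ hr₁; rw [y₁, hv3]; ring
  have t₂ : s₂ = l * r₂ - r₁ * r₃ := by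
    apply mul_left_cancel₀ hr₂; rw [y₂, hv3]; ring
  obtain ⟨m, hm⟩ : ∃ m, m = r₁ + r₂ + r₃ + l := ⟨_, rfl⟩
  have g₁ : 2 * (r₁ ^ 2 + s₁) = m * (r₁ - r₂ - r₃ + l) := by
    rw [hm, t₁]; linear_combination -hl2
  have g₂ : 2 * (r₂ ^ 2 + s₂) = m * (r₂ - r₁ - r₃ + l) := by
    rw [hm, t₂]; linear_combination -hl2
  have hm0 : m ≠ 0 := by
    intro h0
    rw [h0] at g₁
    have : s₁ = - r₁ ^ 2 := by linear_combination g₁ / 2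
    rw [this] at hs₁
    apply hp0; linear_combination -hs₁
  have hgoal : 2 * (r₃ ^ 2 + (r₁ * r₂ - l * r₃)) = (d * w₁ * w₂ / m) ^ 2 := by
    have : (d * w₁ * w₂ / m) ^ 2 = (d * w₁ ^ 2) * (d * w₂ ^ 2) / m ^ 2 := by
      field_simp
    rw [this, ← hw₁, ← hw₂, g₁, g₂]
    field_simp
    linear_combination -hl2
  rw [Point.add_of_X_ne hx]
  have hN : (EDcurve p).Nonsingular (r₃ ^ 2) (r₃ * (r₁ * r₂ - l * r₃)) := by
    apply nons _ _ _ hp0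
    rw [hv3] at hA
    linear_combination r₃ ^ 2 * hA - r₃ ^ 2 * (r₁ ^ 2 + r₂ ^ 2 - r₃ ^ 2) * hl2
  have := double p r₃ _ _ hp0 hN hr30 hgoal
  convert this using 1
  have hsl : (EDcurve p).slope (r₁ ^ 2) (r₂ ^ 2) (r₁ * s₁) (r₂ * s₂) = l := by
    rw [slope_of_X_ne hx, hl]
  apply some_congr
  · rw [hsl]; simp only [addX, EDcurve]; linear_combination hl2
  · rw [hsl]; simp only [addX, addY, negAddY, negY, EDcurve]
    rw [y₁, hv3]; linear_combination -l * hl2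

/-- Membership of a point in the kernel of the first descent map with second class `d`. -/
def Cls (p : ℕ) (d : ℤ) (P : (EDcurve p).Point) : Prop :=
  (P = 0 ∧ d = 1) ∨ ∃ (r s w : ℚ) (h : (EDcurve p).Nonsingular (r ^ 2) (r * s)),
    r ≠ 0 ∧ P = Point.some _ _ h ∧ 2 * (r ^ 2 + s) = d * w ^ 2

lemma Cls.add_mem (p : ℕ) (hp : p.Prime) (d : ℤ) (P Q : (EDcurve p).Point)
    (hP : Cls p d P) (hQ : Cls p d Q) : P + Q ∈ twoSub (EDcurve p).Point := by
  have hp0 : (p : ℚ) ≠ 0 := by exact_mod_cast hp.ne_zero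
  rcases hP with ⟨rfl, hd⟩ | ⟨r₁, s₁, w₁, h₁, hr₁, rfl, hw₁⟩
  · rcases hQ with ⟨rfl, -⟩ | ⟨r₂, s₂, w₂, h₂, hr₂, rfl, hw₂⟩
    · rw [add_zero]; exact zero_mem _
    · rw [zero_add]
      exact double p r₂ s₂ w₂ hp0 h₂ hr₂ (by rw [hw₂, hd]; simp)
  · rcases hQ with ⟨rfl, hd⟩ | ⟨r₂, s₂, w₂, h₂, hr₂, rfl, hw₂⟩
    · rw [add_zero]
      exact double p r₁ s₁ w₁ hp0 h₁ hr₁ (by rw [hw₁, hd]; simp)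
    · by_cases hx : r₁ ^ 2 = r₂ ^ 2
      · rcases Y_eq_of_X_eq h₁.1 h₂.1 hx with hy | hy
        · rw [mem_twoSub]
          exact ⟨_, congrArg₂ (· + ·) rfl (some_congr h₁ h₂ hx hy)⟩
        · rw [Point.add_of_Y_eq hx hy]; exact zero_mem _
      · exact sum_mem p hp d r₁ s₁ w₁ r₂ s₂ w₂ h₁ hr₁ hw₁ h₂ hr₂ hw₂ hx

lemma exists_cls (p : ℕ) (hp : p.Prime) (hodd : p ≠ 2) (r y : ℚ) (hr : r ≠ 0)
    (h : (EDcurve p).Nonsingular (r ^ 2) y) : ∃ d ∈ Dset p, Cls p d (Point.some _ _ h) := by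
  obtain ⟨s, rfl⟩ : ∃ s, y = r * s := ⟨y / r, by field_simp⟩
  have he := (eqn_iff _ _ _).mp h.1
  have hs : s ^ 2 = r ^ 4 + p := by
    apply mul_left_cancel₀ (pow_ne_zero 2 hr); linear_combination he
  obtain ⟨d, hd, w, hw | hw⟩ := classify p hp hodd r s hs
  · exact ⟨d, hd, Or.inr ⟨r, s, w, h, hr, rfl, hw⟩⟩
  · have h' : (EDcurve p).Nonsingular ((-r) ^ 2) (-r * -s) := by
      rw [neg_sq, neg_mul_neg]; exact h
    exact ⟨d, hd, Or.inr ⟨-r, -s, w, h', neg_ne_zero.mpr hr,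
      some_congr _ _ (by ring) (by ring), by rw [← hw]; ring⟩⟩

/-- The rational 2-torsion point. -/
def T (p : ℕ) (hp : p.Prime) : (EDcurve p).Point :=
  .some 0 0 (nons _ _ _ (by exact_mod_cast hp.ne_zero) (by ring))

lemma cover (p : ℕ) (hp : p.Prime) (hodd : p ≠ 2) (P : (EDcurve p).Point) :
    ∃ b : Bool, ∃ d ∈ Dset p, Cls p d (P + if b then T p hp else 0) := by
  have hp0 : (p : ℚ) ≠ 0 := by exact_mod_cast hp.ne_zero
  rcases P with _ | ⟨x, y, h⟩
  · exact ⟨false, 1, one_mem_Dset p, Or.inl ⟨by simp; rfl, rfl⟩⟩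
  have he := (eqn_iff _ _ _).mp h.1
  by_cases hx : x = 0
  · subst hx
    have hy : y = 0 := by
      have : y ^ 2 = 0 := by rw [he]; ring
      exact pow_eq_zero_iff (by norm_num) |>.mp this
    subst hy
    refine ⟨true, 1, one_mem_Dset p, Or.inl ⟨?_, rfl⟩⟩
    simp only [if_true, T]
    exact Point.add_of_Y_eq rfl (by simp [negY, EDcurve])
  · obtain ⟨r, hr, hr' | hr'⟩ := x_class p hp x y hx he
    · subst hr'
      obtain ⟨d, hd, hc⟩ := exists_cls p hp hodd r y hr h
      exact ⟨false, d, hd, by simpa using hc⟩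
    · refine ⟨true, ?_⟩
      simp only [if_true, T]
      rw [Point.add_of_X_ne hx]
      have hX : (EDcurve p).addX x 0 ((EDcurve p).slope x 0 y 0) = (1 / r) ^ 2 := by
        rw [slope_of_X_ne hx]
        simp only [addX, EDcurve, sub_zero]
        have : (y / x) ^ 2 = x + p / x := by
          field_simp; linear_combination he
        simp only [zero_mul, add_zero, sub_zero]
        rw [this, hr']; field_simp; ring
      have key : ∀ (X Y : ℚ) (hN : (EDcurve p).Nonsingular X Y), X = (1 / r) ^ 2 →
          ∃ d ∈ Dset p, Cls p d (Point.some _ _ hN) := by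
        rintro X Y hN rfl
        exact exists_cls p hp hodd _ Y (by positivity) hN
      exact key _ _ _ hX

lemma card_bound (p : ℕ) (hp : p.Prime) (hodd : p ≠ 2) :
    Finite ((EDcurve (p : ℚ)).Point ⧸ twoSub (EDcurve (p : ℚ)).Point) ∧
    Nat.card ((EDcurve (p : ℚ)).Point ⧸ twoSub (EDcurve (p : ℚ)).Point) ≤ 2 * (Dset p).card := by
  choose b d hd hc using cover p hp hodd
  let f : (EDcurve (p : ℚ)).Point ⧸ twoSub (EDcurve (p : ℚ)).Point → Bool × Dset p :=
    fun q => (b q.out, ⟨d q.out, hd q.out⟩)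
  have hf : Function.Injective f := by
    intro q q' h
    simp only [f, Prod.mk.injEq, Subtype.mk.injEq] at h
    rw [← QuotientAddGroup.out_eq' q, ← QuotientAddGroup.out_eq' q', QuotientAddGroup.eq]
    have h1 := hc q.out
    have h2 := hc q'.out
    rw [h.1, h.2] at h1
    have h3 := Cls.add_mem p hp _ _ _ h1 h2
    generalize q.out = A at *
    generalize q'.out = B at *
    generalize (if b B = true then T p hp else 0) = C at *
    have h4 : (A + C) + (A + C) ∈ twoSub (EDcurve (p : ℚ)).Point := (mem_twoSub _).mpr ⟨_, rfl⟩
    have := sub_mem h3 h4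
    convert this using 1
    abel
  refine ⟨Finite.of_injective f hf, ?_⟩
  have := Nat.card_le_card_of_injective f hf
  simpa using this

end ED

theorem stmt18 (p : ℕ) (hp : p.Prime) (hodd : p ≠ 2) :
    Finite ((EDcurve (p : ℚ)).Point ⧸ twoSub (EDcurve (p : ℚ)).Point) ∧
    ((p % 16 = 7 ∨ p % 16 = 11) →
      Nat.card ((EDcurve (p : ℚ)).Point ⧸ twoSub (EDcurve (p : ℚ)).Point) ≤ 2) ∧
    ((p % 16 = 3 ∨ p % 16 = 5 ∨ p % 16 = 13 ∨ p % 16 = 15) →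
      Nat.card ((EDcurve (p : ℚ)).Point ⧸ twoSub (EDcurve (p : ℚ)).Point) ≤ 4) ∧
    ((p % 16 = 1 ∨ p % 16 = 9) →
      Nat.card ((EDcurve (p : ℚ)).Point ⧸ twoSub (EDcurve (p : ℚ)).Point) ≤ 8) := by
  obtain ⟨h1, h2⟩ := ED.card_bound p hp hodd
  refine ⟨h1, fun h => h2.trans ?_, fun h => h2.trans ?_, fun h => h2.trans ?_⟩
  · simp [ED.Dset, h]
  · rcases h with h | h | h | h <;> simp [ED.Dset, h]
  · rcases h with h | h <;> simp [ED.Dset, h]
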